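/- arXiv:2206.03949 — 4 statements merged into one kernel-verified Lean document; each statement's English description precedes it below -/
import Mathlib

section
/- Let V be Lipschitz; let η satisfy the standard kernel assumptions with C_η := ∫_{−∞}^0 η(ξ)|ξ| dξ < ∞; let u : ℝ → ℝ be measurable with 0 ≤ u ≤ 1 a.e., and let w : ℝ → [0,1] satisfy TotVar w < ∞. For ε > 0 define S(x) := ∫_x^{+∞} ε⁻¹ η((x−y)/ε) u(y) (V(w(x)) − V(w(y))) dy. Then ∫_ℝ |S(x)| dx ≤ C_η · ε · (ess sup_{w∈(0,1)} |V'(w)|) · TotVar w, where ess sup_{w∈(0,1)}|V'(w)| may be replaced by the Lipschitz constant of V on [0,1]. -/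
/-!
Since `0 ≤ u ≤ 1` and `V` is `K`-Lipschitz on the range of `w`, `|S(x)|` is at most
`K ∫ ε⁻¹ η((x - y)/ε) |w(x) - w(y)| dy`, where the kernel itself restricts to `y ≥ x`. Substituting
`z = x - y` and applying Tonelli leaves, for each `z < 0`, the integral `∫ |w(x) - w(x - z)| dx`,
which is at most `|z| TotVar w` (`lintegral_edist_translate_le`). The remaining integral
`∫ ε⁻¹ η(z/ε) |z| dz` equals `ε C_η` (`lintegral_scaled_kernel`).

All estimates are made with `ℝ≥0∞`-valued integrals, so the integrability of the integrand
defining `S` plays no role; measurability of `w`, needed for Tonelli, comes from its decomposition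
as a difference of monotone functions.
-/

open MeasureTheory Filter Set
open scoped ENNReal NNReal Topology

/-- Total variation of a function on the whole real line. -/
noncomputable def TotVar (f : ℝ → ℝ) : ℝ≥0∞ := eVariationOn f Set.univ

/-- Standard kernel assumptions. -/
structure StdKernel (η : ℝ → ℝ) : Prop where
  integrable : MeasureTheory.Integrable η
  bounded : ∃ C : ℝ, ∀ x, η x ≤ C
  supp : ∀ x : ℝ, 0 < x → η x = 0
  nonneg : ∀ x, 0 ≤ η x
  mono : MonotoneOn η (Set.Iic 0)
  mass : (∫ x in Set.Iic (0:ℝ), η x) = 1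

/-- Consecutive increments of `f` along the arithmetic progression `a + n t`, `n ∈ ℤ`, sum to at
most the total variation: every finite set of indices lies in some `[-N, N)`. -/
lemma tsum_edist_le_TotVar (f : ℝ → ℝ) (a : ℝ) {t : ℝ} (ht : 0 < t) :
    ∑' n : ℤ, edist (f (a + n * t)) (f (a + n * t + t)) ≤ TotVar f := by
  rw [ENNReal.tsum_eq_iSup_sum]
  refine iSup_le fun s => ?_
  obtain ⟨N, hN⟩ : ∃ N : ℕ, ∀ n ∈ s, n.natAbs < N :=
    ⟨s.sup Int.natAbs + 1, fun n hn => Nat.lt_succ_of_le (Finset.le_sup (f := Int.natAbs) hn)⟩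
  have hsub : s ⊆ (Finset.range (2 * N)).image (fun i : ℕ => (i : ℤ) - N) := by
    intro n hn
    have := hN n hn
    refine Finset.mem_image.2 ⟨(n + N).toNat, Finset.mem_range.2 (by omega), by omega⟩
  refine (Finset.sum_le_sum_of_subset hsub).trans ?_
  rw [Finset.sum_image (fun i _ j _ h => by simpa using h)]
  have hmono : Monotone fun i : ℕ => a + ((i : ℝ) - N) * t := by
    intro i j hij
    have : (i : ℝ) ≤ j := by exact_mod_cast hij
    dsimp only
    gcongr
  refine le_trans (le_of_eq ?_)
    (eVariationOn.sum_le (f := f) (n := 2 * N) hmono (fun i => Set.mem_univ _))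
  refine Finset.sum_congr rfl fun i _ => ?_
  rw [edist_comm]
  push_cast
  ring_nf

lemma measurable_of_TotVar_lt_top {w : ℝ → ℝ} (h : TotVar w < ⊤) : Measurable w := by
  have hb : BoundedVariationOn w Set.univ := h.ne
  obtain ⟨p, q, hp, hq, rfl⟩ := hb.locallyBoundedVariationOn.exists_monotoneOn_sub_monotoneOn
  exact (monotoneOn_univ.1 hp).measurable.sub (monotoneOn_univ.1 hq).measurable

/-- The `L¹` modulus of continuity of a function of bounded variation. The line is cut into the
intervals `(n t, (n + 1) t]`, which are all translated back to `(0, t]`; there the integrand is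
the sum of the increments of `w` along an arithmetic progression. -/
lemma lintegral_edist_translate_le {w : ℝ → ℝ} (h : TotVar w < ⊤) {t : ℝ} (ht : 0 < t) :
    ∫⁻ x : ℝ, edist (w x) (w (x + t)) ≤ ENNReal.ofReal t * TotVar w := by
  have hm := measurable_of_TotVar_lt_top h
  have hF : Measurable fun x => edist (w x) (w (x + t)) :=
    hm.edist (hm.comp (measurable_id.add_const t))
  rw [← setLIntegral_univ, ← iUnion_Ioc_zsmul ht,
    lintegral_iUnion (fun n => measurableSet_Ioc) (pairwise_disjoint_Ioc_zsmul t)]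
  have key : ∀ n : ℤ, ∫⁻ x in Ioc (n • t) ((n + 1) • t), edist (w x) (w (x + t))
      = ∫⁻ x in Ioc 0 t, edist (w (x + n * t)) (w (x + n * t + t)) := by
    intro n
    rw [← (measurePreserving_add_right volume ((n : ℝ) * t)).setLIntegral_comp_preimage
      measurableSet_Ioc hF]
    congr 2
    ext x
    simp only [mem_preimage, mem_Ioc, zsmul_eq_mul, Int.cast_add, Int.cast_one]
    constructor <;> rintro ⟨h1, h2⟩ <;> constructor <;> linarith
  simp_rw [key]
  rw [← lintegral_tsum (f := fun (n : ℤ) x => edist (w (x + n * t)) (w (x + n * t + t))) fun n =>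
    (hF.comp (measurable_id.add_const ((n : ℝ) * t))).aemeasurable]
  calc _ ≤ ∫⁻ _ in Ioc 0 t, TotVar w := lintegral_mono fun x => tsum_edist_le_TotVar w x ht
    _ = _ := by simp [mul_comm]

/-- Convolution form of the estimate, for any kernel `k ≥ 0` vanishing on `(0, ∞)`: translating
`y` to `z = x - y` and exchanging the integrals reduces it to the `L¹` modulus of continuity. -/
lemma lintegral_lintegral_kernel_le {w : ℝ → ℝ} (h : TotVar w < ⊤) {k : ℝ → ℝ≥0∞}
    (hk : AEMeasurable k) (hk0 : ∀ z, 0 < z → k z = 0) :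
    ∫⁻ x : ℝ, ∫⁻ y : ℝ, k (x - y) * edist (w x) (w y)
      ≤ (∫⁻ z : ℝ, k z * ENNReal.ofReal |z|) * TotVar w := by
  have hm := measurable_of_TotVar_lt_top h
  have h1 : ∀ x : ℝ, ∫⁻ y : ℝ, k (x - y) * edist (w x) (w y)
      = ∫⁻ z : ℝ, k z * edist (w x) (w (x - z)) := by
    intro x
    rw [← lintegral_sub_left_eq_self (fun z => k z * edist (w x) (w (x - z))) x]
    simp
  simp_rw [h1]
  rw [lintegral_lintegral_swap]
  · rw [← lintegral_mul_const'' _ (by fun_prop)]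
    refine lintegral_mono fun z => ?_
    have hFz : Measurable fun x => edist (w x) (w (x - z)) :=
      hm.edist (hm.comp (measurable_id.sub_const z))
    rw [lintegral_const_mul _ hFz, mul_assoc]
    rcases lt_trichotomy z 0 with hz | rfl | hz
    · gcongr
      have := lintegral_edist_translate_le h (neg_pos.2 hz)
      simpa [abs_of_neg hz, sub_eq_add_neg] using this
    · simp
    · simp [hk0 z hz]
  · exact hk.comp_snd.mul ((hm.comp measurable_fst).edist
      (hm.comp (measurable_fst.sub measurable_snd))).aemeasurable

/-- The first moment of the rescaled kernel is `ε` times the first moment of `η`. -/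
lemma lintegral_scaled_kernel {η : ℝ → ℝ} (hη : StdKernel η)
    (hηξ : Integrable (fun ξ : ℝ => η ξ * |ξ|)) {ε : ℝ} (hε : 0 < ε) :
    ∫⁻ z : ℝ, ENNReal.ofReal (ε⁻¹ * η (z / ε)) * ENNReal.ofReal |z|
      = ENNReal.ofReal ((∫ ξ in Set.Iic (0:ℝ), η ξ * |ξ|) * ε) := by
  have h1 : ∀ z : ℝ, ENNReal.ofReal (ε⁻¹ * η (z / ε)) * ENNReal.ofReal |z|
      = ENNReal.ofReal (η (z / ε) * |z / ε|) := by
    intro z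
    rw [← ENNReal.ofReal_mul (mul_nonneg (inv_nonneg.2 hε.le) (hη.nonneg _)), abs_div,
      abs_of_pos hε]
    congr 1
    ring
  simp_rw [h1]
  rw [← ofReal_integral_eq_lintegral_ofReal (hηξ.comp_div hε.ne')
    (Eventually.of_forall fun z => mul_nonneg (hη.nonneg _) (abs_nonneg _)),
    Measure.integral_comp_div (fun ξ => η ξ * |ξ|) ε, setIntegral_eq_integral_of_forall_compl_eq_zero]
  · rw [abs_of_pos hε, smul_eq_mul, mul_comm]
  · intro x hx
    rw [hη.supp x (not_le.1 hx), zero_mul]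

/-- The `L¹` estimate on
`S(x) = ∫_x^∞ ε⁻¹ η((x−y)/ε) u(y) (V(w(x)) − V(w(y))) dy`:
`‖S‖_{L¹} ≤ C_η · ε · Lip(V on [0,1]) · TotVar w`. -/
theorem S_L1_estimate (V η : ℝ → ℝ) (K₀ : NNReal) (hV : LipschitzWith K₀ V)
    (hη : StdKernel η)
    (hηξ : MeasureTheory.Integrable (fun ξ : ℝ => η ξ * |ξ|))
    (u : ℝ → ℝ) (hum : Measurable u) (hu : ∀ᵐ x : ℝ, u x ∈ Set.Icc (0:ℝ) 1)
    (w : ℝ → ℝ) (hw : ∀ x, w x ∈ Set.Icc (0:ℝ) 1) (hwtv : TotVar w < ⊤)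
    (K : NNReal) (hVK : LipschitzOnWith K V (Set.Icc (0:ℝ) 1))
    (ε : ℝ) (hε : 0 < ε) :
    (∫⁻ x : ℝ, ENNReal.ofReal
        (|∫ y in Set.Ioi x, ε⁻¹ * η ((x - y) / ε) * u y * (V (w x) - V (w y))|))
      ≤ ENNReal.ofReal ((∫ ξ in Set.Iic (0:ℝ), η ξ * |ξ|) * ε * (K : ℝ)) * TotVar w := by
  set k : ℝ → ℝ≥0∞ := fun z => ENNReal.ofReal (ε⁻¹ * η (z / ε)) with hkdef
  have hk : AEMeasurable k :=
    ((hη.integrable.comp_div hε.ne').aestronglyMeasurable.aemeasurable.const_mul _).ennreal_ofReal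
  have hk0 : ∀ z, 0 < z → k z = 0 := fun z hz => by
    simp [hkdef, hη.supp _ (div_pos hz hε)]
  have hpt : ∀ x : ℝ, ENNReal.ofReal
        (|∫ y in Set.Ioi x, ε⁻¹ * η ((x - y) / ε) * u y * (V (w x) - V (w y))|)
      ≤ K * ∫⁻ y : ℝ, k (x - y) * edist (w x) (w y) := by
    intro x
    rw [← Real.norm_eq_abs, ofReal_norm, ← lintegral_const_mul' _ _ ENNReal.coe_ne_top]
    refine (enorm_integral_le_lintegral_enorm _).trans ((setLIntegral_le_lintegral _ _).trans
      (lintegral_mono_ae ?_))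
    filter_upwards [hu] with y hy
    have hη0 : 0 ≤ ε⁻¹ * η ((x - y) / ε) := mul_nonneg (inv_nonneg.2 hε.le) (hη.nonneg _)
    have hu1 : ‖u y‖ₑ ≤ 1 := by
      rw [Real.enorm_eq_ofReal hy.1]
      exact ENNReal.ofReal_le_one.2 hy.2
    have hV1 : ‖V (w x) - V (w y)‖ₑ ≤ K * edist (w x) (w y) := by
      rw [← edist_eq_enorm_sub]
      exact hVK (hw x) (hw y)
    rw [enorm_mul, enorm_mul, Real.enorm_eq_ofReal hη0]
    calc k (x - y) * ‖u y‖ₑ * ‖V (w x) - V (w y)‖ₑ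
        ≤ k (x - y) * 1 * (K * edist (w x) (w y)) := by gcongr
      _ = K * (k (x - y) * edist (w x) (w y)) := by ring
  calc _ ≤ ∫⁻ x : ℝ, K * ∫⁻ y : ℝ, k (x - y) * edist (w x) (w y) := lintegral_mono hpt
    _ = K * ∫⁻ x : ℝ, ∫⁻ y : ℝ, k (x - y) * edist (w x) (w y) :=
        lintegral_const_mul' _ _ ENNReal.coe_ne_top
    _ ≤ K * ((∫⁻ z : ℝ, k z * ENNReal.ofReal |z|) * TotVar w) := by
        gcongr
        exact lintegral_lintegral_kernel_le hwtv hk hk0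
    _ = _ := by
        rw [lintegral_scaled_kernel hη hηξ hε, ENNReal.ofReal_mul' K.coe_nonneg,
          ENNReal.ofReal_coe_nnreal]
        ring
end

section
/- Let w : ℝ → ℝ be Lipschitz continuous with lim_{x→−∞} w(x) = 0 and lim_{x→+∞} w(x) = 1, and suppose the negative part of its derivative is integrable. Then TotVar w = 1 + 2 ∫_ℝ (w'(x))⁻ dx, where (·)⁻ denotes the negative part and w' is the a.e. derivative of w. -/
/-!
The variation of `w` over `[a, b]` equals `∫ₐᵇ |w'|`. The upper bound is
`|w y - w x| ≤ ∫ₓʸ |w'|`, summed over a partition. For the lower bound, let `V` be the variation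
function of `w` based at `a`: since `V - w` and `V + w` are monotone, `|w'| ≤ V'` almost
everywhere, and the integral of the derivative of the monotone function `V` over `[a, b]` is at
most `V b - V a = V b`.

As `|w'| = w' + 2 (w')⁻`, this variation is `w b - w a + 2 ∫ₐᵇ (w')⁻` by the fundamental theorem
of calculus for Lipschitz functions. Along `[-n, n]` it tends to `1 + 2 ∫ (w')⁻`, and the total
variation is the supremum of the variations over compact intervals. In particular the
integrability of `w'` itself over `ℝ` never has to be discussed.
-/

open MeasureTheory Filter Set
open scoped ENNReal NNReal Topology

theorem LipschitzWith.absContOnInterval {w : ℝ → ℝ} {K : ℝ≥0} (hw : LipschitzWith K w)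
    (a b : ℝ) : AbsolutelyContinuousOnInterval w a b :=
  hw.lipschitzOnWith.absolutelyContinuousOnInterval

theorem LipschitzWith.eVariationOn_Icc_le {w : ℝ → ℝ} {K : ℝ≥0} (hw : LipschitzWith K w)
    {a b : ℝ} : eVariationOn w (Icc a b) ≤ ENNReal.ofReal (∫ x in a..b, |deriv w x|) := by
  have hi (x y : ℝ) : IntervalIntegrable (fun t => |deriv w t|) volume x y :=
    (hw.absContOnInterval x y).intervalIntegrable_deriv.abs
  -- The primitive of `|w'|` is monotone and its increments dominate those of `w`.
  set G : ℝ → ℝ := fun x => ∫ t in a..x, |deriv w t| with hG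
  have hGsub (x y : ℝ) : G y - G x = ∫ t in x..y, |deriv w t| :=
    intervalIntegral.integral_interval_sub_left (hi a y) (hi a x)
  have hGmono : Monotone G := fun x y hxy => by
    have := intervalIntegral.integral_nonneg_of_forall (μ := volume) hxy
      (fun t => abs_nonneg (deriv w t))
    linarith [hGsub x y]
  have key : eVariationOn w (Icc a b) ≤ eVariationOn G (Icc a b) := by
    refine iSup_le fun ⟨n, u, hu, hus⟩ => le_trans ?_ (eVariationOn.sum_le (n := n) hu hus)
    refine Finset.sum_le_sum fun i _ => ?_
    have hle : u i ≤ u (i + 1) := hu i.le_succ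
    rw [edist_dist, edist_dist, Real.dist_eq, Real.dist_eq, hGsub,
      ← (hw.absContOnInterval _ _).integral_deriv_eq_sub]
    exact ENNReal.ofReal_le_ofReal
      ((intervalIntegral.abs_integral_le_integral_abs hle).trans (le_abs_self _))
  rcases le_or_gt a b with hab | hab
  · have h2 := (hGmono.monotoneOn (Icc a b)).eVariationOn_eq (left_mem_Icc.2 hab)
      (right_mem_Icc.2 hab)
    rw [inter_self, hGsub] at h2
    exact key.trans h2.le
  · simp [Icc_eq_empty hab.not_ge, eVariationOn.subsingleton]

theorem LipschitzWith.le_eVariationOn_Icc {w : ℝ → ℝ} {K : ℝ≥0} (hw : LipschitzWith K w)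
    {a b : ℝ} (hab : a ≤ b) :
    ENNReal.ofReal (∫ x in a..b, |deriv w x|) ≤ eVariationOn w (Icc a b) := by
  have hbv : LocallyBoundedVariationOn w univ := hw.locallyBoundedVariationOn univ
  set V : ℝ → ℝ := variationOnFromTo w univ a with hV
  have hVm : Monotone V := monotoneOn_univ.1 (variationOnFromTo.monotoneOn hbv (mem_univ a))
  have hadd : Monotone (V + w) :=
    monotoneOn_univ.1 (variationOnFromTo.add_self_monotoneOn hbv (mem_univ a))
  have hsub : Monotone (V - w) :=
    monotoneOn_univ.1 (variationOnFromTo.sub_self_monotoneOn hbv (mem_univ a))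
  have hae : (fun x => |deriv w x|) ≤ᵐ[volume] deriv V := by
    filter_upwards [hVm.ae_differentiableAt, hw.ae_differentiableAt_real] with x hx hx'
    have h1 := hadd.deriv_nonneg (x := x)
    have h2 := hsub.deriv_nonneg (x := x)
    rw [deriv_add hx hx'] at h1
    rw [deriv_sub hx hx'] at h2
    exact abs_le.2 ⟨by linarith, by linarith⟩
  have hmem := (hVm.monotoneOn (uIcc a b)).intervalIntegral_deriv_mem_uIcc
  rw [uIcc_of_le (sub_nonneg.2 (hVm hab))] at hmem
  have hle := intervalIntegral.integral_mono_ae hab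
    (hw.absContOnInterval a b).intervalIntegrable_deriv.abs
    (hVm.monotoneOn (uIcc a b)).intervalIntegrable_deriv hae
  have hVa : V a = 0 := variationOnFromTo.self w univ a
  have hVb : V b = (eVariationOn w (Icc a b)).toReal := by
    rw [hV, variationOnFromTo.eq_of_le w univ hab, univ_inter]
  have hfin : eVariationOn w (Icc a b) ≠ ∞ := by
    simpa [BoundedVariationOn] using hbv a b (mem_univ a) (mem_univ b)
  refine ENNReal.ofReal_le_of_le_toReal ?_
  linarith [hmem.2]

theorem LipschitzWith.eVariationOn_Icc_eq {w : ℝ → ℝ} {K : ℝ≥0} (hw : LipschitzWith K w)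
    {a b : ℝ} (hab : a ≤ b) :
    eVariationOn w (Icc a b) =
      ENNReal.ofReal (w b - w a + 2 * ∫ x in a..b, max (-(deriv w x)) 0) := by
  have hi : IntervalIntegrable (deriv w) volume a b :=
    (hw.absContOnInterval a b).intervalIntegrable_deriv
  have habs (x : ℝ) : |deriv w x| = deriv w x + 2 * max (-(deriv w x)) 0 := by
    rcases le_total 0 (deriv w x) with h | h
    · rw [abs_of_nonneg h, max_eq_right (by linarith)]; ring
    · rw [abs_of_nonpos h, max_eq_left (by linarith)]; ring
  have hneg : IntervalIntegrable (fun x => 2 * max (-(deriv w x)) 0) volume a b := by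
    refine (hi.abs.sub hi).congr fun x _ => ?_
    simp [habs x]
  rw [hw.eVariationOn_Icc_le.antisymm (hw.le_eVariationOn_Icc hab),
    ← (hw.absContOnInterval a b).integral_deriv_eq_sub,
    ← intervalIntegral.integral_const_mul, ← intervalIntegral.integral_add hi hneg]
  simp only [habs]

/-- Formula (6.6): for a Lipschitz function `w` with `w(−∞) = 0`, `w(+∞) = 1` and
integrable negative part of the derivative,
`TotVar w = 1 + 2 ∫ (w')⁻`. -/
theorem totVar_formula (w : ℝ → ℝ) (K : NNReal) (hw : LipschitzWith K w)
    (h0 : Tendsto w atBot (𝓝 0)) (h1 : Tendsto w atTop (𝓝 1))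
    (hint : MeasureTheory.Integrable (fun x => max (-(deriv w x)) 0)) :
    TotVar w = ENNReal.ofReal (1 + 2 * ∫ x : ℝ, max (-(deriv w x)) 0) := by
  have hlim : Tendsto (fun r : ℝ => eVariationOn w (Icc (-r) r)) atTop
      (𝓝 (ENNReal.ofReal (1 + 2 * ∫ x : ℝ, max (-(deriv w x)) 0))) := by
    have hI := intervalIntegral_tendsto_integral hint tendsto_neg_atTop_atBot tendsto_id
    have h := ENNReal.tendsto_ofReal
      ((h1.sub (h0.comp tendsto_neg_atTop_atBot)).add (hI.const_mul 2))
    rw [sub_zero] at h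
    refine h.congr' ?_
    filter_upwards [eventually_ge_atTop 0] with r hr
    rw [hw.eVariationOn_Icc_eq (by linarith)]
    rfl
  refine le_antisymm ?_ (le_of_tendsto' hlim fun r => eVariationOn.mono w (subset_univ _))
  rw [TotVar, eVariationOn.eq_biSup_inter_Icc]
  refine iSup₂_le fun p _ => ge_of_tendsto hlim ?_
  filter_upwards [eventually_ge_atTop (-p.1), eventually_ge_atTop p.2] with r hr hr'
  rw [univ_inter]
  exact eVariationOn.mono w (Icc_subset_Icc (by linarith) hr')
end

section
/- Fix ℓ, h ∈ (0,1) and δ with 0 < δ < 2ℓ. Let v_{hℓ}(x) := h for x ∈ (−7ℓ,−6ℓ) ∪ (−3ℓ,−2ℓ) and v_{hℓ}(x) := 0 otherwise; let s ∈ L^∞(ℝ) satisfy 0 ≤ s ≤ 1 and s(x) = 0 for a.e. x ∉ (−δ, 0); set u_0(x) := v_{hℓ}(x) + s(x) + 1_{(0,∞)}(x). Let ε := 4ℓ and define w(x) := ε⁻¹ ∫_x^{x+ε} u_0(y) dy. Then TotVar w = 1. -/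
/-!
The averaged function `w` is nondecreasing, equals `0` far to the left and `1` on `[0, ∞)`; a
nondecreasing function has total variation equal to its oscillation, here `1`.

Monotonicity is the content. Up to the factor `(4ℓ)⁻¹`, the increment `w b - w a` is
`∫ t in a..b, (u₀ (t + 4ℓ) - u₀ t)`, so it suffices that `u₀ t ≤ u₀ (t + 4ℓ)` for a.e. `t`
(`datum_le_shift`). The shift by `4ℓ` carries the left rectangle onto the right one; on `(-4ℓ, 0]`
the value `u₀ t` is at most `1`, because `s` and the right rectangle have disjoint supports
(this is where `δ < 2ℓ` enters), and there `u₀ (t + 4ℓ) ≥ 1`.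
-/

open MeasureTheory Filter Set
open scoped ENNReal NNReal Topology

/-- The basic building block: two rectangles of height `h` and length `ℓ` located at
distance `2ℓ` and `6ℓ` from the origin. -/
noncomputable def vblock (ℓ h : ℝ) (x : ℝ) : ℝ :=
  if x ∈ Set.Ioo (-7 * ℓ) (-6 * ℓ) ∪ Set.Ioo (-3 * ℓ) (-2 * ℓ) then h else 0

/-- The datum `u₀ = v_{hℓ} + s + 1_{(0,∞)}`. -/
noncomputable def datum (ℓ h : ℝ) (s : ℝ → ℝ) (y : ℝ) : ℝ :=
  vblock ℓ h y + s y + (if 0 < y then (1:ℝ) else 0)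

/-- The pointwise inequality behind monotonicity. The hypotheses at `t` and at `t + 4ℓ` are
separate because the bounds on `s` hold only almost everywhere. The rectangle contributes at most
`h < 1` at `t`, and what it contributes left of `-4ℓ` reappears at `t + 4ℓ`. -/
lemma datum_le_shift {ℓ h δ : ℝ} (hℓ : 0 < ℓ) (hh : h ∈ Set.Ioo (0:ℝ) 1) (hδ2 : δ < 2 * ℓ)
    {s : ℝ → ℝ} {t : ℝ} (h1 : s t ≤ 1) (h10 : t ∉ Set.Ioo (-δ) 0 → s t = 0)
    (h2 : 0 ≤ s (t + 4 * ℓ)) :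
    datum ℓ h s t ≤ datum ℓ h s (t + 4 * ℓ) := by
  obtain ⟨hh0, hh1⟩ := hh
  unfold datum vblock
  simp only [Set.mem_union, Set.mem_Ioo] at *
  by_cases ht : t ∈ Set.Ioo (-δ) 0
  · obtain ⟨ha, hb⟩ := ht
    have e1 : ¬ ((-7 * ℓ < t ∧ t < -6 * ℓ) ∨ (-3 * ℓ < t ∧ t < -2 * ℓ)) := by
      rintro (⟨_, _⟩ | ⟨_, _⟩) <;> linarith
    have e2 : 0 < t + 4 * ℓ := by linarith
    rw [if_neg e1, if_neg (not_lt.2 hb.le), if_pos e2]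
    split_ifs <;> linarith
  · rw [h10 ht]
    by_cases c1 : (-7 * ℓ < t ∧ t < -6 * ℓ) ∨ (-3 * ℓ < t ∧ t < -2 * ℓ)
    · rw [if_pos c1]
      rcases c1 with ⟨_, _⟩ | ⟨_, _⟩
      · rw [if_neg (by linarith : ¬ 0 < t), if_pos (Or.inr ⟨by linarith, by linarith⟩)]
        split_ifs <;> linarith
      · rw [if_neg (by linarith : ¬ 0 < t), if_pos (by linarith : 0 < t + 4 * ℓ)]
        split_ifs <;> linarith
    · rw [if_neg c1]
      split_ifs <;> linarith

lemma datum_intervalIntegrable {ℓ h : ℝ} {s : ℝ → ℝ} (hsm : Measurable s)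
    (hs : ∀ᵐ x : ℝ, 0 ≤ s x ∧ s x ≤ 1) (a b : ℝ) :
    IntervalIntegrable (datum ℓ h s) volume a b := by
  have hm : Measurable (datum ℓ h s) := by
    unfold datum vblock
    refine ((Measurable.ite (measurableSet_Ioo.union measurableSet_Ioo) measurable_const
      measurable_const).add hsm).add (Measurable.ite measurableSet_Ioi measurable_const
      measurable_const)
  refine IntervalIntegrable.mono_fun (f := fun _ => |h| + 1 + 1) intervalIntegrable_const
    hm.aestronglyMeasurable ?_
  filter_upwards [ae_restrict_of_ae hs] with x hx
  have hv : |vblock ℓ h x| ≤ |h| := by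
    unfold vblock; split_ifs <;> simp
  have hi : |(if 0 < x then (1:ℝ) else 0)| ≤ 1 := by split_ifs <;> simp
  have hsx : |s x| ≤ 1 := abs_le.2 ⟨by linarith [hx.1], hx.2⟩
  rw [Real.norm_eq_abs, Real.norm_eq_abs, abs_of_nonneg (by positivity : 0 ≤ |h| + 1 + 1)]
  exact (abs_add_three _ _ _).trans (by linarith)

/-- A monotone function with values in `[0, 1]` that attains `0` to the left of a point where it
attains `1` has total variation `1`. -/
lemma totVar_eq_one_of_monotone {f : ℝ → ℝ} (hf : Monotone f) (h0 : ∀ x, 0 ≤ f x)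
    (h1 : ∀ x, f x ≤ 1) {a b : ℝ} (ha : f a = 0) (hb : f b = 1) : TotVar f = 1 := by
  apply le_antisymm
  · refine iSup_le ?_
    rintro ⟨n, u, hu, -⟩
    have hn (i : ℕ) : edist (f (u (i + 1))) (f (u i))
        = ENNReal.ofReal (f (u (i + 1)) - f (u i)) := by
      rw [edist_dist, Real.dist_eq, abs_of_nonneg (sub_nonneg.2 (hf (hu (Nat.le_succ i))))]
    simp only [hn]
    rw [← ENNReal.ofReal_sum_of_nonneg
      (fun i _ => sub_nonneg.2 (hf (hu (Nat.le_succ i)))),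
      Finset.sum_range_sub (fun i => f (u i))]
    exact ENNReal.ofReal_le_one.2 (by linarith [h0 (u 0), h1 (u n)])
  · have := eVariationOn.edist_le f (mem_univ b) (mem_univ a)
    rwa [ha, hb, edist_dist, Real.dist_eq, sub_zero, abs_one, ENNReal.ofReal_one] at this

/-- Lemma 6.3: for the datum `u₀ = v_{hℓ} + s + 1_{(0,∞)}` and `ε = 4ℓ`, the averaged
function `w(x) = ε⁻¹ ∫_x^{x+ε} u₀` has total variation exactly `1`. -/
theorem totVar_building_block_eq_one (ℓ h δ : ℝ)
    (hℓ : ℓ ∈ Set.Ioo (0:ℝ) 1) (hh : h ∈ Set.Ioo (0:ℝ) 1)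
    (hδ : 0 < δ) (hδ2 : δ < 2 * ℓ)
    (s : ℝ → ℝ) (hsm : Measurable s)
    (hs : ∀ᵐ x : ℝ, 0 ≤ s x ∧ s x ≤ 1)
    (hs0 : ∀ᵐ x : ℝ, x ∉ Set.Ioo (-δ) 0 → s x = 0) :
    TotVar (fun x => (4 * ℓ)⁻¹ * ∫ y in Set.Ioo x (x + 4 * ℓ),
        (vblock ℓ h y + s y + (if 0 < y then (1:ℝ) else 0))) = 1 := by
  have hl : 0 < ℓ := hℓ.1
  set w : ℝ → ℝ := fun x => (4 * ℓ)⁻¹ * ∫ y in Set.Ioo x (x + 4 * ℓ),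
        (vblock ℓ h y + s y + (if 0 < y then (1:ℝ) else 0)) with hw
  have hint := datum_intervalIntegrable (ℓ := ℓ) (h := h) hsm hs
  have hwi (x : ℝ) : w x = (4 * ℓ)⁻¹ * ∫ y in x..(x + 4 * ℓ), datum ℓ h s y := by
    rw [intervalIntegral.integral_of_le (by linarith), integral_Ioc_eq_integral_Ioo]
    rfl
  have hshift {p : ℝ → Prop} (hp : ∀ᵐ x : ℝ, p x) : ∀ᵐ x : ℝ, p (x + 4 * ℓ) :=
    (measurePreserving_add_right volume (4 * ℓ)).quasiMeasurePreserving.ae hp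
  have hmono : Monotone w := by
    intro a b hab
    rw [hwi, hwi]
    refine mul_le_mul_of_nonneg_left ?_ (by positivity)
    have key : ∫ t in a..b, datum ℓ h s t ≤ ∫ t in a..b, datum ℓ h s (t + 4 * ℓ) := by
      refine intervalIntegral.integral_mono_ae hab (hint a b) ?_ ?_
      · simpa using (hint (a + 4 * ℓ) (b + 4 * ℓ)).comp_add_right (4 * ℓ)
      · filter_upwards [hs, hs0, hshift hs] with t h1 h2 h3
        exact datum_le_shift hl hh hδ2 h1.2 h2 h3.1
    rw [intervalIntegral.integral_comp_add_right] at key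
    have e1 := intervalIntegral.integral_add_adjacent_intervals (hint a b) (hint b (b + 4 * ℓ))
    have e2 := intervalIntegral.integral_add_adjacent_intervals (hint a (a + 4 * ℓ))
      (hint (a + 4 * ℓ) (b + 4 * ℓ))
    linarith
  have hleft (x : ℝ) (hx : x ≤ -11 * ℓ) : w x = 0 := by
    have : ∫ y in Set.Ioo x (x + 4 * ℓ), datum ℓ h s y = 0 := by
      refine integral_eq_zero_of_ae ?_
      filter_upwards [ae_restrict_of_ae hs0, ae_restrict_mem measurableSet_Ioo] with y h1 hy
      obtain ⟨hy1, hy2⟩ := hy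
      have n1 : ¬ y ∈ Set.Ioo (-7 * ℓ) (-6 * ℓ) ∪ Set.Ioo (-3 * ℓ) (-2 * ℓ) := by
        rintro (⟨_, _⟩ | ⟨_, _⟩) <;> linarith
      have n2 : ¬ 0 < y := by linarith
      simp only [datum, vblock, if_neg n1, if_neg n2, Pi.zero_apply]
      rw [h1 (fun hc => by linarith [hc.1])]
      simp
    exact mul_eq_zero_of_right _ this
  have hright (x : ℝ) (hx : 0 ≤ x) : w x = 1 := by
    have : ∫ y in x..(x + 4 * ℓ), datum ℓ h s y = ∫ y in x..(x + 4 * ℓ), (1:ℝ) := by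
      refine intervalIntegral.integral_congr_ae ?_
      filter_upwards [hs0] with y h1 hy
      rw [uIoc_of_le (by linarith)] at hy
      have hy0 : 0 < y := hx.trans_lt hy.1
      have n1 : ¬ y ∈ Set.Ioo (-7 * ℓ) (-6 * ℓ) ∪ Set.Ioo (-3 * ℓ) (-2 * ℓ) := by
        rintro (⟨_, _⟩ | ⟨_, _⟩) <;> linarith
      simp only [datum, vblock, if_neg n1, if_pos hy0]
      rw [h1 (fun hc => by linarith [hc.2])]
      simp
    rw [hwi, this, intervalIntegral.integral_const]
    simp only [smul_eq_mul, mul_one, add_sub_cancel_left]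
    exact inv_mul_cancel₀ (by positivity)
  refine totVar_eq_one_of_monotone hmono (fun x => ?_) (fun x => ?_)
    (hleft (-11 * ℓ) le_rfl) (hright 0 le_rfl)
  · rw [← hleft (min x (-11 * ℓ)) (min_le_right _ _)]
    exact hmono (min_le_left _ _)
  · rw [← hright (max x 0) (le_max_right _ _)]
    exact hmono (le_max_left _ _)
end

section
/- Fix ℓ, h ∈ (0,1), δ > 0 and ε > 0 with ℓ > max{ε + δ, 2ε}. Let v_{hℓ}(x) := h for x ∈ (−7ℓ,−6ℓ) ∪ (−3ℓ,−2ℓ) and v_{hℓ}(x) := 0 otherwise; let s ∈ L^∞(ℝ) satisfy 0 ≤ s ≤ 1 and s(x) = 0 for a.e. x ∉ (−δ, 0); set u_0(x) := v_{hℓ}(x) + s(x) + 1_{(0,∞)}(x), and define w(x) := ε⁻¹ ∫_x^{x+ε} u_0(y) dy. Then ∫_{−7ℓ−ε}^{−2ℓ} |w'(x)| dx = 4h, where w' is the a.e. derivative of the Lipschitz function w. -/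
/-!
On the interval `(-7ℓ - ε, -2ℓ)` the averaging window `(x, x + ε)` stays to the left of `-δ`
because `ε + δ < ℓ`, so only the block `vblock ℓ h` contributes to the average. By the fundamental
theorem of calculus the derivative of the average is the difference quotient
`ε⁻¹ (v (x + ε) - v x)` whenever neither `x` nor `x + ε` is one of the four jump points of `v`
(`hasDerivAt_average_vblock`). Since `ε < ℓ`, the window meets at most one jump at a time, so the
absolute value of this quotient is `ε⁻¹ h` on the four disjoint intervals `(c - ε, c)`, with
`c = -7ℓ, -6ℓ, -3ℓ, -2ℓ` the jump points, and zero elsewhere (`abs_vblock_sub`). Each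
interval has length `ε` and contributes `h` to the integral.
-/

open MeasureTheory Filter Set
open scoped ENNReal NNReal Topology

theorem integrable_vblock (ℓ h : ℝ) : Integrable (vblock ℓ h) := by
  have e : vblock ℓ h = (Set.Ioo (-7 * ℓ) (-6 * ℓ) ∪ Set.Ioo (-3 * ℓ) (-2 * ℓ)).indicator
      (fun _ => h) := by
    ext x
    simp only [vblock, Set.indicator_apply]
  rw [e, integrable_indicator_iff (measurableSet_Ioo.union measurableSet_Ioo)]
  exact (integrableOn_const (by simp)).union (integrableOn_const (by simp))

/-- The block is locally constant away from its four jump points. -/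
theorem continuousAt_vblock (ℓ h t : ℝ) (h1 : t ≠ -7 * ℓ) (h2 : t ≠ -6 * ℓ)
    (h3 : t ≠ -3 * ℓ) (h4 : t ≠ -2 * ℓ) : ContinuousAt (vblock ℓ h) t := by
  have key : ∀ c : ℝ, t ≠ c → ∀ᶠ y in 𝓝 t, (y < c ↔ t < c) ∧ (c < y ↔ c < t) := by
    intro c hc
    rcases lt_or_gt_of_ne hc with hlt | hgt
    · filter_upwards [Iio_mem_nhds hlt] with y hy
      have : y < c := hy
      exact ⟨by tauto, by constructor <;> intro <;> linarith⟩
    · filter_upwards [Ioi_mem_nhds hgt] with y hy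
      have : c < y := hy
      exact ⟨by constructor <;> intro <;> linarith, by tauto⟩
  have hev : vblock ℓ h =ᶠ[𝓝 t] fun _ => vblock ℓ h t := by
    filter_upwards [key _ h1, key _ h2, key _ h3, key _ h4] with y k1 k2 k3 k4
    simp only [vblock, Set.mem_union, Set.mem_Ioo, k1, k2, k3, k4]
  exact continuousAt_const.congr hev.symm

theorem hasDerivAt_primitive_vblock (ℓ h t : ℝ) (h1 : t ≠ -7 * ℓ) (h2 : t ≠ -6 * ℓ)
    (h3 : t ≠ -3 * ℓ) (h4 : t ≠ -2 * ℓ) :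
    HasDerivAt (fun u => ∫ y in (0:ℝ)..u, vblock ℓ h y) (vblock ℓ h t) t :=
  intervalIntegral.integral_hasDerivAt_right (integrable_vblock ℓ h).intervalIntegrable
    ((integrable_vblock ℓ h).aestronglyMeasurable.stronglyMeasurableAtFilter)
    (continuousAt_vblock ℓ h t h1 h2 h3 h4)

theorem hasDerivAt_average_vblock (ℓ h ε x : ℝ) (hε : 0 < ε)
    (h1 : x ≠ -7 * ℓ) (h2 : x ≠ -6 * ℓ) (h3 : x ≠ -3 * ℓ) (h4 : x ≠ -2 * ℓ)
    (k1 : x ≠ -7 * ℓ - ε) (k2 : x ≠ -6 * ℓ - ε) (k3 : x ≠ -3 * ℓ - ε) (k4 : x ≠ -2 * ℓ - ε) :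
    HasDerivAt (fun x' => ε⁻¹ * ∫ y in Set.Ioo x' (x' + ε), vblock ℓ h y)
      (ε⁻¹ * (vblock ℓ h (x + ε) - vblock ℓ h x)) x := by
  have e : (fun x' => ε⁻¹ * ∫ y in Set.Ioo x' (x' + ε), vblock ℓ h y) = fun x' =>
      ε⁻¹ * ((∫ y in (0:ℝ)..(x' + ε), vblock ℓ h y) - ∫ y in (0:ℝ)..x', vblock ℓ h y) := by
    ext x'
    rw [intervalIntegral.integral_interval_sub_left (integrable_vblock ℓ h).intervalIntegrable
      (integrable_vblock ℓ h).intervalIntegrable,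
      intervalIntegral.integral_of_le (by linarith), integral_Ioc_eq_integral_Ioo]
  rw [e]
  have d1 := hasDerivAt_primitive_vblock ℓ h (x + ε) (fun q => k1 (by linarith))
    (fun q => k2 (by linarith)) (fun q => k3 (by linarith)) (fun q => k4 (by linarith))
  exact ((d1.comp_add_const x ε).sub (hasDerivAt_primitive_vblock ℓ h x h1 h2 h3 h4)).const_mul _

/-- Away from the jumps, `x` and `x + ε` lie on opposite sides of an endpoint of the block
exactly when `x` is within `ε` to the left of that endpoint. -/
theorem abs_vblock_sub (ℓ h ε x : ℝ) (hh : 0 < h) (hε : 0 < ε) (hεℓ : ε < ℓ)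
    (h1 : x ≠ -7 * ℓ) (h2 : x ≠ -6 * ℓ) (h3 : x ≠ -3 * ℓ) (h4 : x ≠ -2 * ℓ)
    (k1 : x ≠ -7 * ℓ - ε) (k2 : x ≠ -6 * ℓ - ε) (k3 : x ≠ -3 * ℓ - ε) (k4 : x ≠ -2 * ℓ - ε) :
    |ε⁻¹ * (vblock ℓ h (x + ε) - vblock ℓ h x)| =
      (Set.Ioo (-7 * ℓ - ε) (-7 * ℓ)).indicator (fun _ => ε⁻¹ * h) x
      + (Set.Ioo (-6 * ℓ - ε) (-6 * ℓ)).indicator (fun _ => ε⁻¹ * h) x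
      + (Set.Ioo (-3 * ℓ - ε) (-3 * ℓ)).indicator (fun _ => ε⁻¹ * h) x
      + (Set.Ioo (-2 * ℓ - ε) (-2 * ℓ)).indicator (fun _ => ε⁻¹ * h) x := by
  rw [abs_mul, abs_of_pos (inv_pos.2 hε)]
  have p : |vblock ℓ h (x + ε) - vblock ℓ h x| =
      (if -7 * ℓ - ε < x ∧ x < -7 * ℓ then h else 0)
      + (if -6 * ℓ - ε < x ∧ x < -6 * ℓ then h else 0)
      + (if -3 * ℓ - ε < x ∧ x < -3 * ℓ then h else 0)
      + (if -2 * ℓ - ε < x ∧ x < -2 * ℓ then h else 0) := by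
    simp only [vblock, Set.mem_union, Set.mem_Ioo, ← sub_lt_iff_lt_add, ← lt_sub_iff_add_lt]
    -- The breakpoints are ordered, so only nine of the sign patterns below are consistent.
    rcases lt_or_gt_of_ne k1 with f1 | f1
    all_goals
      rcases lt_or_gt_of_ne h1 with g1 | g1 <;> try (exfalso; linarith)
    all_goals
      rcases lt_or_gt_of_ne k2 with f2 | f2 <;> try (exfalso; linarith)
    all_goals
      rcases lt_or_gt_of_ne h2 with g2 | g2 <;> try (exfalso; linarith)
    all_goals
      rcases lt_or_gt_of_ne k3 with f3 | f3 <;> try (exfalso; linarith)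
    all_goals
      rcases lt_or_gt_of_ne h3 with g3 | g3 <;> try (exfalso; linarith)
    all_goals
      rcases lt_or_gt_of_ne k4 with f4 | f4 <;> try (exfalso; linarith)
    all_goals
      rcases lt_or_gt_of_ne h4 with g4 | g4 <;> try (exfalso; linarith)
    all_goals
      simp only [f1, g1, f2, g2, f3, g3, f4, g4,
        f1.not_gt, g1.not_gt, f2.not_gt, g2.not_gt, f3.not_gt, g3.not_gt, f4.not_gt, g4.not_gt]
      simp [abs_of_pos hh]
  rw [p]
  simp only [Set.indicator_apply, Set.mem_Ioo, mul_add, mul_ite, mul_zero]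

theorem setIntegral_indicator_window (a b c ε h : ℝ) (hε : 0 < ε) (ha : a ≤ c - ε) (hb : c ≤ b) :
    ∫ x in Set.Ioo a b, (Set.Ioo (c - ε) c).indicator (fun _ => ε⁻¹ * h) x = h := by
  rw [setIntegral_indicator measurableSet_Ioo,
    Set.inter_eq_self_of_subset_right (Set.Ioo_subset_Ioo ha hb), setIntegral_const,
    Real.volume_real_Ioo_of_le (by linarith)]
  simp only [sub_sub_cancel, smul_eq_mul]
  field_simp

/-- Identity (6.8): for `ℓ > max{ε + δ, 2ε}` and the datum `u₀ = v_{hℓ} + s + 1_{(0,∞)}`,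
the averaged function `w(x) = ε⁻¹ ∫_x^{x+ε} u₀` satisfies
`∫_{−7ℓ−ε}^{−2ℓ} |w'(x)| dx = 4h`. -/
theorem building_block_variation_at_scale_eps (ℓ h δ ε : ℝ)
    (hℓ : ℓ ∈ Set.Ioo (0:ℝ) 1) (hh : h ∈ Set.Ioo (0:ℝ) 1)
    (hδ : 0 < δ) (hε : 0 < ε) (hℓbig : max (ε + δ) (2 * ε) < ℓ)
    (s : ℝ → ℝ) (hsm : Measurable s)
    (hs : ∀ᵐ x : ℝ, 0 ≤ s x ∧ s x ≤ 1)
    (hs0 : ∀ᵐ x : ℝ, x ∉ Set.Ioo (-δ) 0 → s x = 0) :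
    (∫ x in Set.Ioo (-7 * ℓ - ε) (-2 * ℓ),
        |deriv (fun x' => ε⁻¹ * ∫ y in Set.Ioo x' (x' + ε),
            (vblock ℓ h y + s y + (if 0 < y then (1:ℝ) else 0))) x|)
      = 4 * h := by
  obtain ⟨hℓ0, -⟩ := hℓ
  have hδℓ : ε + δ < ℓ := (le_max_left _ _).trans_lt hℓbig
  have hεℓ : ε < ℓ := by linarith
  -- The spike and the step at the origin do not reach the window `(x, x + ε)`.
  have hw : ∀ x ∈ Set.Ioo (-7 * ℓ - ε) (-2 * ℓ),
      ε⁻¹ * ∫ y in Set.Ioo x (x + ε), (vblock ℓ h y + s y + (if 0 < y then (1:ℝ) else 0))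
        = ε⁻¹ * ∫ y in Set.Ioo x (x + ε), vblock ℓ h y := by
    intro x hx
    congr 1
    refine setIntegral_congr_ae measurableSet_Ioo ?_
    filter_upwards [hs0] with y hy hyx
    have hlt : y < -δ := by linarith [hyx.2, hx.2]
    rw [hy (fun q => by linarith [q.1]), if_neg (by linarith)]
    ring
  have hne : ∀ c : ℝ, ∀ᵐ x : ℝ, x ≠ c := fun c => Measure.ae_ne volume c
  have hcongr : ∀ᵐ x : ℝ, x ∈ Set.Ioo (-7 * ℓ - ε) (-2 * ℓ) →
      |deriv (fun x' => ε⁻¹ * ∫ y in Set.Ioo x' (x' + ε),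
          (vblock ℓ h y + s y + (if 0 < y then (1:ℝ) else 0))) x| =
      (Set.Ioo (-7 * ℓ - ε) (-7 * ℓ)).indicator (fun _ => ε⁻¹ * h) x
      + (Set.Ioo (-6 * ℓ - ε) (-6 * ℓ)).indicator (fun _ => ε⁻¹ * h) x
      + (Set.Ioo (-3 * ℓ - ε) (-3 * ℓ)).indicator (fun _ => ε⁻¹ * h) x
      + (Set.Ioo (-2 * ℓ - ε) (-2 * ℓ)).indicator (fun _ => ε⁻¹ * h) x := by
    filter_upwards [hne (-7 * ℓ), hne (-6 * ℓ), hne (-3 * ℓ), hne (-2 * ℓ), hne (-7 * ℓ - ε),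
      hne (-6 * ℓ - ε), hne (-3 * ℓ - ε), hne (-2 * ℓ - ε)] with x h1 h2 h3 h4 k1 k2 k3 k4 hx
    have hd := hasDerivAt_average_vblock ℓ h ε x hε h1 h2 h3 h4 k1 k2 k3 k4
    rw [(Filter.eventuallyEq_of_mem (isOpen_Ioo.mem_nhds hx) hw).deriv_eq, hd.deriv]
    exact abs_vblock_sub ℓ h ε x hh.1 hε hεℓ h1 h2 h3 h4 k1 k2 k3 k4
  rw [setIntegral_congr_ae measurableSet_Ioo hcongr]
  have hint : ∀ c : ℝ, Integrable ((Set.Ioo (c - ε) c).indicator (fun _ => ε⁻¹ * h))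
      (volume.restrict (Set.Ioo (-7 * ℓ - ε) (-2 * ℓ))) := fun c =>
    (integrable_const (ε⁻¹ * h)).indicator measurableSet_Ioo
  rw [integral_add, integral_add, integral_add,
    setIntegral_indicator_window _ _ _ _ _ hε (by linarith) (by linarith),
    setIntegral_indicator_window _ _ _ _ _ hε (by linarith) (by linarith),
    setIntegral_indicator_window _ _ _ _ _ hε (by linarith) (by linarith),
    setIntegral_indicator_window _ _ _ _ _ hε (by linarith) (by linarith)]
  · ring
  all_goals first
    | exact hint _
    | exact (hint _).add (hint _)
    | exact ((hint _).add (hint _)).add (hint _)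
end
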